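/- Suppose θ is an infinite cardinal < κ such that κ → (κ, θ)², and H is an ideal on P_κ(λ) with cof(H) < non_κ(weakly selective). Then H⁺ →_{κ,κ} (H⁺, θ+1)². -/

import Mathlib

open Cardinal Set

namespace PaperFormal

noncomputable section

/-- The least (small) cardinality of a family `F : Set X` satisfying `P`. -/
def leastCard {X : Type 1} (P : Set X → Prop) : Cardinal.{0} :=
  sInf {c : Cardinal.{0} | ∃ F : Set X, P F ∧ Cardinal.lift.{1} c = #F}

/-- The collection of (codings of) functions from `κ` to `κ`. -/
def funOn (κ : Cardinal.{0}) : Set (Ordinal.{0} → Ordinal.{0}) :=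
  {f | ∀ α < κ.ord, f α < κ.ord}

/-- The unequality number `U_κ`. -/
def uneq (κ : Cardinal.{0}) : Cardinal.{0} :=
  leastCard fun F : Set (Ordinal.{0} → Ordinal.{0}) => F ⊆ funOn κ ∧
    ∀ g ∈ funOn κ, ∃ f ∈ F, {α | α < κ.ord ∧ f α = g α} = ∅

/-- The dominating number `d_κ`. -/
def domNum (κ : Cardinal.{0}) : Cardinal.{0} :=
  leastCard fun F : Set (Ordinal.{0} → Ordinal.{0}) => F ⊆ funOn κ ∧
    ∀ g ∈ funOn κ, ∃ f ∈ F, ∀ α < κ.ord, g α < f α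

/-- The number `d̄_κ`. -/
def domBar (κ : Cardinal.{0}) : Cardinal.{0} :=
  leastCard fun X : Set (Ordinal.{0} → Ordinal.{0}) => X ⊆ funOn κ ∧
    ∀ g ∈ funOn κ, ∃ x ⊆ X, x.Nonempty ∧ #x < Cardinal.lift.{1} κ ∧
      ∀ α < κ.ord, g α < sSup {o | ∃ f ∈ x, f α = o}

/-- The generalized Cantor space `^ρ2`, with points coded as subsets of `Iio ρ.ord`. -/
def cantor (ρ : Cardinal.{0}) : Set (Set Ordinal.{0}) := {x | x ⊆ Iio ρ.ord}

/-- A forcing condition: a pair `(a, t)` with `t ⊆ a ⊆ Iio ρ.ord` and `|a| < ν`. -/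
def IsCond (ν ρ : Cardinal.{0}) (a t : Set Ordinal.{0}) : Prop :=
  a ⊆ Iio ρ.ord ∧ t ⊆ a ∧ #a < Cardinal.lift.{1} ν

/-- The basic open set determined by a condition. -/
def basicOpen (ρ : Cardinal.{0}) (a t : Set Ordinal.{0}) : Set (Set Ordinal.{0}) :=
  {x | x ⊆ Iio ρ.ord ∧ x ∩ a = t}

/-- Dense open subsets of `^ρ2` (for the `<ν`-support topology). -/
def DenseOpen (ν ρ : Cardinal.{0}) (D : Set (Set Ordinal.{0})) : Prop :=
  D ⊆ cantor ρ ∧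
  (∀ x ∈ D, ∃ a t, IsCond ν ρ a t ∧ x ∈ basicOpen ρ a t ∧ basicOpen ρ a t ⊆ D) ∧
  (∀ a t, IsCond ν ρ a t → (basicOpen ρ a t ∩ D).Nonempty)

/-- Members of `M_{ν,ρ}`. -/
def Meager (ν ρ : Cardinal.{0}) (W : Set (Set Ordinal.{0})) : Prop :=
  W ⊆ cantor ρ ∧ ∃ X : Set (Set (Set Ordinal.{0})), X.Nonempty ∧
    #X ≤ Cardinal.lift.{1} ν ∧ (∀ D ∈ X, DenseOpen ν ρ D) ∧ W ∩ ⋂₀ X = ∅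

/-- The covering number for category `cov(M_{ν,ρ})`. -/
def covM (ν ρ : Cardinal.{0}) : Cardinal.{0} :=
  leastCard fun Y : Set (Set (Set Ordinal.{0})) =>
    (∀ W ∈ Y, Meager ν ρ W) ∧ ⋃₀ Y = cantor ρ

/-- A (`κ`-complete) ideal on `κ`. -/
structure IdealK (κ : Cardinal.{0}) where
  mem : Set (Set Ordinal.{0})
  subset_iio : ∀ A ∈ mem, A ⊆ Iio κ.ord
  singleton_mem : ∀ α < κ.ord, {α} ∈ mem
  subset_mem : ∀ A ∈ mem, ∀ B ⊆ A, B ∈ mem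
  sUnion_mem : ∀ X : Set (Set Ordinal.{0}), X ⊆ mem → #X < Cardinal.lift.{1} κ → ⋃₀ X ∈ mem
  ne_top : Iio κ.ord ∉ mem

/-- `J⁺`, the sets (⊆ κ) not in the ideal. -/
def IdealK.plus {κ : Cardinal.{0}} (J : IdealK κ) : Set (Set Ordinal.{0}) :=
  {A | A ⊆ Iio κ.ord ∧ A ∉ J.mem}

/-- `cof(J)`. -/
def IdealK.cof {κ : Cardinal.{0}} (J : IdealK κ) : Cardinal.{0} :=
  leastCard fun X : Set (Set Ordinal.{0}) =>
    X ⊆ J.mem ∧ ∀ A, A ∈ J.mem ↔ ∃ B ∈ X, A ⊆ B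

/-- `cof̄(J)`. -/
def IdealK.cofBar {κ : Cardinal.{0}} (J : IdealK κ) : Cardinal.{0} :=
  leastCard fun X : Set (Set Ordinal.{0}) =>
    X ⊆ J.mem ∧ ∀ A ∈ J.mem, ∃ x ⊆ X, #x < Cardinal.lift.{1} κ ∧ A ⊆ ⋃₀ x

/-- `non_κ(P)`. -/
def nonK (κ : Cardinal.{0}) (P : IdealK κ → Prop) : Cardinal.{0} :=
  sInf {c | ∃ J : IdealK κ, J.cof = c ∧ ¬ P J}

/-- `non̄_κ(P)`. -/
def nonBarK (κ : Cardinal.{0}) (P : IdealK κ → Prop) : Cardinal.{0} :=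
  sInf {c | ∃ J : IdealK κ, J.cofBar = c ∧ ¬ P J}

/-- Weak `P`-point. -/
def WeakPPoint {κ : Cardinal.{0}} (J : IdealK κ) : Prop :=
  ∀ A ∈ J.plus, ∀ f : Ordinal.{0} → Ordinal.{0},
    (∀ α ∈ A, f α < κ.ord) → (∀ β, {α ∈ A | f α = β} ∈ J.mem) →
    ∃ B ∈ J.plus, B ⊆ A ∧ ∀ β, #{α ∈ B | f α = β} < Cardinal.lift.{1} κ

/-- Weak `Q`-point. -/
def WeakQPoint {κ : Cardinal.{0}} (J : IdealK κ) : Prop :=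
  ∀ A ∈ J.plus, ∀ g ∈ funOn κ,
    ∃ B ∈ J.plus, B ⊆ A ∧ ∀ α ∈ B, ∀ β ∈ B, α < β → g α < β

/-- Weakly selective ideal. -/
def WeaklySelective {κ : Cardinal.{0}} (J : IdealK κ) : Prop :=
  WeakPPoint J ∧ WeakQPoint J

/-- Weak semi-`Q`-point. -/
def WeakSemiQPoint {κ : Cardinal.{0}} (J : IdealK κ) : Prop :=
  ∀ A ∈ J.plus, ∀ f : Ordinal.{0} → Ordinal.{0},
    (∀ α ∈ A, f α < κ.ord) →
    (∀ β, #{α ∈ A | f α = β} < Cardinal.lift.{1} κ) →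
    ∃ C ∈ J.plus, C ⊆ A ∧ ∀ β < κ.ord, #{α ∈ C | f α = β} ≤ Cardinal.lift.{1} β.card

/-- `P_κ(λ)`, coded as the small subsets of `Iio λ.ord`. -/
def smallSet (κ lam : Cardinal.{0}) : Set (Set Ordinal.{0}) :=
  {a | a ⊆ Iio lam.ord ∧ #a < Cardinal.lift.{1} κ}

/-- The ideal `I_{κ,λ}` of noncofinal subsets of `P_κ(λ)`. -/
def Ikl (κ lam : Cardinal.{0}) : Set (Set (Set Ordinal.{0})) :=
  {A | A ⊆ smallSet κ lam ∧ ∃ a ∈ smallSet κ lam, ∀ b ∈ A, ¬ a ⊆ b}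

/-- A (`κ`-complete fine) ideal on `P_κ(λ)`. -/
structure IdealP (κ lam : Cardinal.{0}) where
  mem : Set (Set (Set Ordinal.{0}))
  subset_pk : ∀ A ∈ mem, A ⊆ smallSet κ lam
  fine : Ikl κ lam ⊆ mem
  subset_mem : ∀ A ∈ mem, ∀ B ⊆ A, B ∈ mem
  sUnion_mem : ∀ X : Set (Set (Set Ordinal.{0})), X ⊆ mem →
    #X < Cardinal.lift.{1} κ → ⋃₀ X ∈ mem
  ne_top : smallSet κ lam ∉ mem

/-- `H⁺` computed from the underlying collection `Hm` of an ideal on `P_κ(λ)`. -/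
def plusOf (κ lam : Cardinal.{0}) (Hm : Set (Set (Set Ordinal.{0}))) :
    Set (Set (Set Ordinal.{0})) :=
  {A | A ⊆ smallSet κ lam ∧ A ∉ Hm}

/-- `H⁺`. -/
def IdealP.plus {κ lam : Cardinal.{0}} (H : IdealP κ lam) : Set (Set (Set Ordinal.{0})) :=
  plusOf κ lam H.mem

/-- `cof(H)`. -/
def IdealP.cof {κ lam : Cardinal.{0}} (H : IdealP κ lam) : Cardinal.{0} :=
  leastCard fun X : Set (Set (Set Ordinal.{0})) =>
    X ⊆ H.mem ∧ ∀ A, A ∈ H.mem ↔ ∃ B ∈ X, A ⊆ B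

/-- `cof̄(H)`. -/
def IdealP.cofBar {κ lam : Cardinal.{0}} (H : IdealP κ lam) : Cardinal.{0} :=
  leastCard fun X : Set (Set (Set Ordinal.{0})) =>
    X ⊆ H.mem ∧ ∀ A ∈ H.mem, ∃ x ⊆ X, #x < Cardinal.lift.{1} κ ∧ A ⊆ ⋃₀ x

/-- `d^κ_{κ,λ}`. -/
def domP (κ lam : Cardinal.{0}) : Cardinal.{0} :=
  leastCard fun F : Set (Ordinal.{0} → Set Ordinal.{0}) =>
    (∀ f ∈ F, ∀ α < κ.ord, f α ∈ smallSet κ lam) ∧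
    ∀ g : Ordinal.{0} → Set Ordinal.{0}, (∀ α < κ.ord, g α ∈ smallSet κ lam) →
      ∃ f ∈ F, ∀ α < κ.ord, g α ⊆ f α

/-- A maximal almost disjoint family of size `≥ κ` for `H` (a member of `M_H^{≥κ}`). -/
def IsMad {κ lam : Cardinal.{0}} (H : IdealP κ lam) (Q : Set (Set (Set Ordinal.{0}))) : Prop :=
  Q ⊆ H.plus ∧ Cardinal.lift.{1} κ ≤ #Q ∧
  (∀ A ∈ Q, ∀ B ∈ Q, A ≠ B → A ∩ B ∈ H.mem) ∧
  ∀ C ∈ H.plus, ∃ A ∈ Q, A ∩ C ∈ H.plus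

/-- The (small) cardinal `c` with `lift c = c'`, used to pull `λ^{<κ} = |P_κ(λ)|` down. -/
def downCard (c : Cardinal.{1}) : Cardinal.{0} :=
  sInf {d : Cardinal.{0} | Cardinal.lift.{1} d = c}

open Classical in
/-- The number `a_H`. -/
def aNum {κ lam : Cardinal.{0}} (H : IdealP κ lam) : Cardinal.{0} :=
  if ∃ Q, IsMad H Q then sInf {c | ∃ Q, IsMad H Q ∧ Cardinal.lift.{1} c = #Q}
  else 2 ^ Order.succ (downCard #(smallSet κ lam))

/-- Weak `π`-point. -/
def WeakPiPoint {κ lam : Cardinal.{0}} (H : IdealP κ lam) : Prop :=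
  ∀ f : Ordinal.{0} → Set (Set Ordinal.{0}), (∀ α < κ.ord, f α ∈ H.mem) →
    ∀ A ∈ H.plus, ∃ B ∈ H.plus, B ⊆ A ∧ ∀ α < κ.ord, B ∩ f α ∈ Ikl κ lam

/-- `∪(a ∩ κ)`. -/
def supK (κ : Cardinal.{0}) (a : Set Ordinal.{0}) : Ordinal.{0} :=
  sSup (a ∩ Iio κ.ord)

/-- The relation `a ≺ b`. -/
def prec (κ : Cardinal.{0}) (a b : Set Ordinal.{0}) : Prop :=
  a ⊆ b ∧ supK κ a < supK κ b

/-- `[A]_κ²`. -/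
def pairsK (κ : Cardinal.{0}) (A : Set (Set Ordinal.{0})) : Set (Ordinal.{0} × Set Ordinal.{0}) :=
  {p | ∃ a ∈ A, ∃ b ∈ A, supK κ a < supK κ b ∧ p = (supK κ a, b)}

/-- `[A]_≺²`. -/
def pairsPrec (κ : Cardinal.{0}) (A : Set (Set Ordinal.{0})) :
    Set (Ordinal.{0} × Set Ordinal.{0}) :=
  {p | ∃ a ∈ A, ∃ b ∈ A, prec κ a b ∧ p = (supK κ a, b)}

/-- `[A]_{κ,κ}²`. -/
def pairsKK (κ : Cardinal.{0}) (A : Set (Set Ordinal.{0})) : Set (Ordinal.{0} × Ordinal.{0}) :=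
  {p | ∃ a ∈ A, ∃ b ∈ A, supK κ a < supK κ b ∧ p = (supK κ a, supK κ b)}

/-- `S` is a set of ordinals of order type `α`. -/
def OrdType (S : Set Ordinal.{0}) (α : Ordinal.{0}) : Prop :=
  ∃ e : Ordinal.{0} → Ordinal.{0},
    (∀ i < α, ∀ j < α, i < j → e i < e j) ∧ e '' Iio α = S

/-- `(B, ≺)` has order type `α`. -/
def OrdTypePrec (κ : Cardinal.{0}) (B : Set (Set Ordinal.{0})) (α : Ordinal.{0}) : Prop :=
  ∃ e : Ordinal.{0} → Set Ordinal.{0},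
    (∀ i < α, ∀ j < α, i < j → prec κ (e i) (e j)) ∧ e '' Iio α = B

/-- The partition relation `κ → (κ, θ)²`. -/
def ArrowKTheta (κ : Cardinal.{0}) (θ : Ordinal.{0}) : Prop :=
  ∀ f : Ordinal.{0} → Ordinal.{0} → Fin 2, ∃ A ⊆ Iio κ.ord,
    (OrdType A κ.ord ∧ ∀ α ∈ A, ∀ β ∈ A, α < β → f α β = 0) ∨
    (OrdType A θ ∧ ∀ α ∈ A, ∀ β ∈ A, α < β → f α β = 1)

/-- `κ` is weakly compact. -/
def WeaklyCompact (κ : Cardinal.{0}) : Prop :=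
  ∀ f : Ordinal.{0} → Ordinal.{0} → Fin 2, ∃ A ⊆ Iio κ.ord,
    OrdType A κ.ord ∧ ∃ i, ∀ α ∈ A, ∀ β ∈ A, α < β → f α β = i

/-- The partition relation `J⁺ → (J⁺, α)²` for an ideal on `κ`. -/
def ArrowJ {κ : Cardinal.{0}} (J : IdealK κ) (α : Ordinal.{0}) : Prop :=
  ∀ A ∈ J.plus, ∀ f : Ordinal.{0} → Ordinal.{0} → Fin 2,
    ∃ B ⊆ A, (B ∈ J.plus ∧ ∀ β ∈ B, ∀ γ ∈ B, β < γ → f β γ = 0) ∨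
             (OrdType B α ∧ ∀ β ∈ B, ∀ γ ∈ B, β < γ → f β γ = 1)

/-- The square bracket relation `J⁺ → [J⁺]_ρ²` for an ideal on `κ`. -/
def SqBrJ {κ : Cardinal.{0}} (J : IdealK κ) (ρ : Cardinal.{0}) : Prop :=
  ∀ A ∈ J.plus, ∀ f : Ordinal.{0} → Ordinal.{0} → Ordinal.{0},
    (∀ β ∈ A, ∀ γ ∈ A, β < γ → f β γ < ρ.ord) →
    ∃ B ∈ J.plus, B ⊆ A ∧ {ξ | ∃ β ∈ B, ∃ γ ∈ B, β < γ ∧ f β γ = ξ} ≠ Iio ρ.ord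

/-- `H⁺ →_κ (H⁺, α)²`. -/
def ArrowP (κ lam : Cardinal.{0}) (Hm : Set (Set (Set Ordinal.{0}))) (α : Ordinal.{0}) : Prop :=
  ∀ F : Ordinal.{0} → Set Ordinal.{0} → Fin 2, ∀ A ∈ plusOf κ lam Hm,
    ∃ B ⊆ A, (B ∈ plusOf κ lam Hm ∧ ∀ p ∈ pairsK κ B, F p.1 p.2 = 0) ∨
             (OrdTypePrec κ B α ∧ ∀ p ∈ pairsK κ B, F p.1 p.2 = 1)

/-- `H⁺ →_{κ,κ} (H⁺, α)²`. -/
def ArrowPKK (κ lam : Cardinal.{0}) (Hm : Set (Set (Set Ordinal.{0}))) (α : Ordinal.{0}) : Prop :=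
  ∀ F : Ordinal.{0} → Ordinal.{0} → Fin 2, ∀ A ∈ plusOf κ lam Hm,
    ∃ B ⊆ A, (B ∈ plusOf κ lam Hm ∧ ∀ p ∈ pairsKK κ B, F p.1 p.2 = 0) ∨
             (OrdTypePrec κ B α ∧ ∀ p ∈ pairsKK κ B, F p.1 p.2 = 1)

/-- `H⁺ →_{κ,κ} (H⁺; α)²`. -/
def ArrowPKKsemi (κ lam : Cardinal.{0}) (Hm : Set (Set (Set Ordinal.{0}))) (α : Ordinal.{0}) :
    Prop :=
  ∀ F : Ordinal.{0} → Ordinal.{0} → Fin 2, ∀ A ∈ plusOf κ lam Hm,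
    ∃ B ⊆ A, (B ∈ plusOf κ lam Hm ∧ ∀ p ∈ pairsKK κ B, F p.1 p.2 = 0) ∨
             (OrdType {o | ∃ a ∈ B, supK κ a = o} α ∧ ∀ p ∈ pairsKK κ B, F p.1 p.2 = 1)

/-- `H⁺ →_κ (H⁺)²`. -/
def ArrowPConst (κ lam : Cardinal.{0}) (Hm : Set (Set (Set Ordinal.{0}))) : Prop :=
  ∀ F : Ordinal.{0} → Set Ordinal.{0} → Fin 2, ∀ A ∈ plusOf κ lam Hm,
    ∃ B ∈ plusOf κ lam Hm, B ⊆ A ∧ ∃ i, ∀ p ∈ pairsK κ B, F p.1 p.2 = i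

/-- `H⁺ →_{κ,κ} [H⁺]_ρ²`. -/
def SqBrPKK (κ lam : Cardinal.{0}) (Hm : Set (Set (Set Ordinal.{0}))) (ρ : Cardinal.{0}) : Prop :=
  ∀ F : Ordinal.{0} → Ordinal.{0} → Ordinal.{0},
    (∀ α β : Ordinal.{0}, α < β → β < κ.ord → F α β < ρ.ord) →
    ∀ A ∈ plusOf κ lam Hm, ∃ B ∈ plusOf κ lam Hm, B ⊆ A ∧
      {ξ | ∃ p ∈ pairsKK κ B, F p.1 p.2 = ξ} ≠ Iio ρ.ord

/-- The class `K(κ,λ)`. -/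
def Kset (κ lam : Cardinal.{0}) : Set Cardinal.{0} :=
  {σ | lam ≤ σ ∧ ∃ T ⊆ smallSet κ lam, Cardinal.lift.{1} σ = #T ∧
    ∀ a ∈ smallSet κ lam, #{t ∈ T | t ⊆ a} < Cardinal.lift.{1} κ}

end

end PaperFormal

/-!
Let `F` colour pairs below `κ`, let `A ∈ H⁺`, and suppose that `A` has no subset in `H⁺` all of
whose pairs get colour `0`. For `C ⊆ A` let `h β` be the least index `α` of a member of `C` with
`F α β = 1`, or `β` if there is none below `β`. Pushing `H` restricted to `C` forward along
`a ↦ ∪(a ∩ κ)` gives a `κ`-complete filter on `κ` generated by `cof H` sets. If `h` were unbounded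
on all of these sets, then forcing `h` to tend to `κ` would keep the filter proper and add at most
`κ ≤ cof H` generators, so the dual ideal would be weakly selective. As the fibres of `h` belong to
that ideal, this would give a positive set `E` with `α < h β` for all `α < β` in `E`, that is, a
positive subset of `C` of colour `0`. So `h` is bounded on a set of the filter, which means that
fewer than `κ` members of `C` suffice to supply, for almost every `b ∈ C`, some `a ≺ b` of colour
`1`.

Iterating this along a tree, where the nodes above a branch `K` are taken from
`{b ∈ A | a ≺ b with colour 1 for all a ∈ K}`, one gets a tree of height `θ` whose levels have size
less than `κ` because `τ ^ ρ < κ` for `τ < κ` and `ρ < θ`. Almost every `b ∈ A` can follow the tree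
through all its levels, and the branch so obtained, topped by `b` itself, is the required set of
order type `θ + 1`.

The cardinal arithmetic is extracted from `κ → (κ, θ)²` by Sierpiński's argument on the
lexicographic order.
-/

namespace PaperFormal

open Filter Topology

section Cardinals

variable {κ : Cardinal.{0}}

theorem mk_Iio_lt_lift {γ : Ordinal.{0}} (hγ : γ < κ.ord) :
    #(Iio γ) < Cardinal.lift.{1} κ := by
  rw [mk_Iio_ordinal, Cardinal.lift_lt]
  exact lt_ord.1 hγ

theorem mk_prod_subtype_lt_ord_le {ι : Type 1} {p : ι → Prop} {c : Cardinal.{0}} (hc₀ : ℵ₀ ≤ c)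
    (hκc : κ ≤ c) (hp : #{i // p i} ≤ Cardinal.lift.{1} c) :
    #{i : ι × Ordinal.{0} // p i.1 ∧ i.2 < κ.ord} ≤ Cardinal.lift.{1} c := by
  have hIio : #(Iio κ.ord) = Cardinal.lift.{1} κ := by simp
  have hκ : #(Iio κ.ord) ≤ Cardinal.lift.{1} c := hIio.trans_le (Cardinal.lift_le.2 hκc)
  calc #{i : ι × Ordinal.{0} // p i.1 ∧ i.2 < κ.ord}
      = #({i // p i} × Iio κ.ord) :=
        mk_congr (Equiv.subtypeProdEquivProd (p := p) (q := fun γ ↦ γ < κ.ord))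
    _ = #{i // p i} * #(Iio κ.ord) := by rw [mk_prod, Cardinal.lift_id, Cardinal.lift_id]
    _ ≤ Cardinal.lift.{1} c * Cardinal.lift.{1} c := mul_le_mul' hp hκ
    _ = Cardinal.lift.{1} c := mul_eq_self (aleph0_le_lift.2 hc₀)

theorem leastCard_spec {X : Type 1} {P : Set X → Prop} {F : Set X} [Small.{0} F] (hF : P F) :
    ∃ F : Set X, P F ∧ Cardinal.lift.{1} (leastCard P) = #F :=
  csInf_mem (s := {c : Cardinal.{0} | ∃ F : Set X, P F ∧ Cardinal.lift.{1} c = #F})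
    ⟨#(Shrink F), F, hF, by simp⟩

theorem leastCard_le {X : Type 1} {P : Set X → Prop} {F : Set X} {c : Cardinal.{0}} (hF : P F)
    (hc : #F ≤ Cardinal.lift.{1} c) : leastCard P ≤ c := by
  obtain ⟨d, hd⟩ := mem_range_lift_of_le hc
  have hle : leastCard P ≤ d := csInf_le' ⟨F, hF, hd⟩
  exact hle.trans (Cardinal.lift_le.1 (hd.trans_le hc))

theorem isSuccLimit_ord_of_isRegular [Fact κ.IsRegular] : Order.IsSuccLimit κ.ord :=
  isSuccLimit_ord (Fact.out : κ.IsRegular).aleph0_le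

theorem hasBasis_nhdsLT_ord [Fact κ.IsRegular] :
    (𝓝[<] κ.ord).HasBasis (· < κ.ord) (Ioo · κ.ord) :=
  nhdsLT_basis_of_exists_lt ⟨0, (Fact.out : κ.IsRegular).ord_pos⟩

instance neBot_nhdsLT_ord [Fact κ.IsRegular] : (𝓝[<] κ.ord).NeBot :=
  hasBasis_nhdsLT_ord.neBot_iff.2 fun {γ} hγ ↦
    ⟨γ + 1, lt_add_one γ, isSuccLimit_ord_of_isRegular.add_one_lt hγ⟩

instance cardinalInterFilter_nhdsLT_ord [Fact κ.IsRegular] :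
    CardinalInterFilter (𝓝[<] κ.ord) (Cardinal.lift.{1} κ) where
  cardinal_sInter_mem S hS hmem := by
    choose! γ hγ hγS using fun s hs ↦ hasBasis_nhdsLT_ord.mem_iff.1 (hmem s hs)
    have hsup : sSup (γ '' S) < κ.ord := by
      refine Ordinal.sSup_lt_of_lt_cof ?_ (forall_mem_image.2 hγ)
      rw [← Ordinal.lift_cof, (Fact.out : κ.IsRegular).cof_ord]
      exact mk_image_le.trans_lt hS
    refine mem_of_superset (Ioo_mem_nhdsLT hsup) fun i hi s hs ↦ hγS s hs ⟨?_, hi.2⟩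
    have hbdd : BddAbove (γ '' S) := ⟨κ.ord, forall_mem_image.2 fun s hs ↦ (hγ s hs).le⟩
    exact (le_csSup hbdd (mem_image_of_mem γ hs)).trans_lt hi.1

end Cardinals

section LexicographicOrder

variable {μ : Cardinal.{0}} [Fact μ.IsRegular] {β : Type 1} {u : Ordinal.{0} → β} {γ : Ordinal.{0}}

theorem exists_eventually_eq_of_monotoneOn_of_mk_lt [LinearOrder β]
    (hβ : #β < Cardinal.lift.{1} μ) (hγ : γ < μ.ord) (hu : MonotoneOn u (Ioo γ μ.ord)) :
    ∃ x, ∀ᶠ i in 𝓝[<] μ.ord, u i = x := by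
  have hvalue : ∀ v, ∀ᶠ i in 𝓝[<] μ.ord, v < u i ∨ ∀ j ∈ Ioo γ μ.ord, u j ≤ v := by
    intro v
    by_cases! hv : ∃ d ∈ Ioo γ μ.ord, v < u d
    · obtain ⟨d, hd, hvd⟩ := hv
      filter_upwards [Ioo_mem_nhdsLT hd.2] with i hi
      exact .inl (hvd.trans_le (hu hd ⟨hd.1.trans hi.1, hi.2⟩ hi.1.le))
    · exact .of_forall fun _ ↦ .inr hv
  obtain ⟨δ, hδ, hδγ⟩ :=
    (((eventually_cardinal_forall hβ).2 hvalue).and (Ioo_mem_nhdsLT hγ)).exists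
  refine ⟨u δ, ?_⟩
  filter_upwards [Ioo_mem_nhdsLT hδγ.2] with i hi
  have hiγ : i ∈ Ioo γ μ.ord := ⟨hδγ.1.trans hi.1, hi.2⟩
  exact (((hδ (u δ)).resolve_left (lt_irrefl _)) i hiγ).antisymm (hu hδγ hiγ hi.1.le)

theorem exists_eventually_eq_of_monotoneOn_of_wellFoundedGT [PartialOrder β] [WellFoundedGT β]
    (hγ : γ < μ.ord) (hu : MonotoneOn u (Ioo γ μ.ord)) :
    ∃ x, ∀ᶠ i in 𝓝[<] μ.ord, u i = x := by
  have hne : (u '' Ioo γ μ.ord).Nonempty := (Filter.nonempty_of_mem (Ioo_mem_nhdsLT hγ)).image u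
  obtain ⟨_, ⟨δ, hδ, rfl⟩, hmax⟩ := wellFounded_gt.has_min _ hne
  refine ⟨u δ, ?_⟩
  filter_upwards [Ioo_mem_nhdsLT hδ.2] with i hi
  have hiγ : i ∈ Ioo γ μ.ord := ⟨hδ.1.trans hi.1, hi.2⟩
  exact ((hu hδ hiγ hi.1.le).eq_of_not_lt (hmax _ (mem_image_of_mem u hiγ))).symm

theorem not_strictMonoOn_lex {ι : Type 1} [LinearOrder ι] [WellFoundedLT ι] [PartialOrder β]
    (hι : #ι < Cardinal.lift.{1} μ)
    (hβ : ∀ (u : Ordinal.{0} → β), ∀ γ < μ.ord, MonotoneOn u (Ioo γ μ.ord) →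
      ∃ x, ∀ᶠ i in 𝓝[<] μ.ord, u i = x)
    (f : Ordinal.{0} → Lex (ι → β)) : ¬ StrictMonoOn f (Iio μ.ord) := by
  intro hf
  -- Once all earlier coordinates have settled, coordinate `c` is monotone, hence settles as well.
  have hcoord : ∀ c, ∃ x, ∀ᶠ i in 𝓝[<] μ.ord, f i c = x := by
    intro c
    induction c using WellFoundedLT.induction with
    | ind c ih =>
      have : Nonempty β := ⟨f 0 c⟩
      choose! x hx using ih
      have hbelow : ∀ᶠ i in 𝓝[<] μ.ord, ∀ c' ∈ Iio c, f i c' = x c' :=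
        (eventually_cardinal_ball ((mk_set_le _).trans_lt hι)).2 hx
      obtain ⟨γ, hγ, hγx⟩ := hasBasis_nhdsLT_ord.eventually_iff.1 hbelow
      refine hβ (f · c) γ hγ fun i hi j hj hij ↦ ?_
      rcases hij.eq_or_lt with rfl | hij
      · exact le_rfl
      obtain ⟨c₀, heq, hlt⟩ := hf hi.2 hj.2 hij
      rcases lt_trichotomy c₀ c with h | rfl | h
      · exact absurd ((hγx hi c₀ h).trans (hγx hj c₀ h).symm) hlt.ne
      · exact hlt.le
      · exact (heq c h).le
  choose x hx using hcoord
  obtain ⟨γ, hγ, hγx⟩ := hasBasis_nhdsLT_ord.eventually_iff.1 ((eventually_cardinal_forall hι).2 hx)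
  obtain ⟨i, hi⟩ := Filter.nonempty_of_mem (Ioo_mem_nhdsLT hγ)
  obtain ⟨j, hj⟩ := Filter.nonempty_of_mem (Ioo_mem_nhdsLT hi.2)
  have hfij : f i = f j :=
    funext fun c ↦ (hγx hi c).trans (hγx ⟨hi.1.trans hj.1, hj.2⟩ c).symm
  exact (hf hi.2 hj.2 hj.1).ne hfij

theorem not_strictAntiOn_lex {ι : Type 1} [LinearOrder ι] [WellFoundedLT ι] [PartialOrder β]
    [WellFoundedLT β] (hι : #ι < Cardinal.lift.{1} μ) (f : Ordinal.{0} → Lex (ι → β)) :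
    ¬ StrictAntiOn f (Iio μ.ord) := by
  intro hf
  refine not_strictMonoOn_lex (β := βᵒᵈ) hι
    (fun _ _ hγ ↦ exists_eventually_eq_of_monotoneOn_of_wellFoundedGT hγ)
    (fun i ↦ toLex fun c ↦ OrderDual.toDual (f i c)) fun i hi j hj hij ↦ ?_
  obtain ⟨c, heq, hlt⟩ := hf hi hj hij
  exact ⟨c, fun c' hc' ↦ congrArg OrderDual.toDual (heq c' hc').symm, hlt⟩

end LexicographicOrder

theorem OrdType.exists_strictMonoOn {A : Set Ordinal.{0}} {α : Ordinal.{0}} (hA : OrdType A α) :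
    ∃ e : Ordinal.{0} → Ordinal.{0}, StrictMonoOn e (Iio α) ∧ MapsTo e (Iio α) A := by
  obtain ⟨e, he, rfl⟩ := hA
  exact ⟨e, fun i hi j hj ↦ he i hi j hj, mapsTo_image e _⟩

theorem exists_injOn_of_le_power {κ τ ρ : Cardinal.{0}} (h : κ ≤ τ ^ ρ) (hκ : κ ≠ 0) :
    ∃ f : Ordinal.{0} → (Iio ρ.ord → Iio τ.ord), InjOn f (Iio κ.ord) := by
  have hle : #(Iio κ.ord) ≤ #(Iio ρ.ord → Iio τ.ord) := by
    simpa [← power_def, mk_Iio_ordinal, ← lift_power] using h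
  obtain ⟨G⟩ := hle
  have h0 : (0 : Ordinal) < κ.ord := by simpa [pos_iff_ne_zero] using hκ
  refine ⟨Function.extend Subtype.val G fun _ ↦ G ⟨0, h0⟩, fun α hα β hβ hαβ ↦ ?_⟩
  have hval : ∀ a : Iio κ.ord, _ := Subtype.val_injective.extend_apply G fun _ ↦ G ⟨0, h0⟩
  have : G ⟨α, hα⟩ = G ⟨β, hβ⟩ := (hval ⟨α, hα⟩).symm.trans (hαβ.trans (hval ⟨β, hβ⟩))
  exact congrArg Subtype.val (G.injective this)

open Classical in
theorem power_lt_of_arrowKTheta {κ θ τ ρ : Cardinal.{0}} (hκ : κ.IsRegular)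
    (hθκ : θ ≤ κ) (harrow : ArrowKTheta κ θ.ord) (hτ : τ < κ) (hρ : ρ < θ) : τ ^ ρ < κ := by
  rcases lt_or_ge ρ ℵ₀ with hfin | hinf
  · obtain ⟨n, rfl⟩ := lt_aleph0.1 hfin
    rcases lt_or_ge τ ℵ₀ with hτ₀ | hτ₀
    · exact (power_lt_aleph0 hτ₀ hfin).trans_le hκ.aleph0_le
    · exact (power_nat_le hτ₀).trans_lt hτ
  by_contra! hκle
  have : Fact κ.IsRegular := ⟨hκ⟩
  have : Fact (Order.succ ρ).IsRegular := ⟨isRegular_succ hinf⟩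
  obtain ⟨f, hf⟩ := exists_injOn_of_le_power hκle hκ.ne_zero
  -- Sierpiński's colouring: compare the order of `κ` with the lexicographic order of `τ ^ ρ`, which
  -- has neither increasing sequences of length `κ` nor decreasing ones of length `ρ⁺`.
  obtain ⟨A, hA, ⟨hordA, hcol⟩ | ⟨hordA, hcol⟩⟩ :=
    harrow fun α β ↦ if toLex (f α) < toLex (f β) then 0 else 1
  · obtain ⟨e, he, heA⟩ := hordA.exists_strictMonoOn
    refine not_strictMonoOn_lex (mk_Iio_lt_lift (ord_lt_ord.2 (hρ.trans_le hθκ)))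
      (fun _ _ hγ ↦ exists_eventually_eq_of_monotoneOn_of_mk_lt
        (mk_Iio_lt_lift (ord_lt_ord.2 hτ)) hγ)
      (fun i ↦ toLex (f (e i))) fun i hi j hj hij ↦ ?_
    exact of_not_not fun hnot ↦
      zero_ne_one ((hcol _ (heA hi) _ (heA hj) (he hi hj hij)).symm.trans (if_neg hnot))
  · obtain ⟨e, he, heA⟩ := hordA.exists_strictMonoOn
    have hsucc : Iio (Order.succ ρ).ord ⊆ Iio θ.ord :=
      Iio_subset_Iio (ord_le_ord.2 (Order.succ_le_of_lt hρ))
    refine not_strictAntiOn_lex (mk_Iio_lt_lift (ord_lt_ord.2 (Order.lt_succ ρ)))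
      (fun i ↦ toLex (f (e i))) fun i hi j hj hij ↦ ?_
    have hei : e i ∈ A := heA (hsucc hi)
    have hej : e j ∈ A := heA (hsucc hj)
    have heij : e i < e j := he (hsucc hi) (hsucc hj) hij
    have hnot : ¬ toLex (f (e i)) < toLex (f (e j)) := fun hlt ↦
      zero_ne_one ((if_pos hlt).symm.trans (hcol _ hei _ hej heij))
    exact (not_lt.1 hnot).lt_of_ne fun h ↦ heij.ne' (hf (hA hej) (hA hei) (toLex.injective h))

section IdealsOnCardinal

variable {κ : Cardinal.{0}} {l : Filter Ordinal.{0}}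

/-- The ideal on `κ` dual to a `κ`-complete filter `l` that concentrates on the final segments of
`κ`. Ideals are represented by filters because bounding `cof` then amounts to bounding the size of
a filter basis. -/
def IdealK.ofFilter (l : Filter Ordinal.{0}) [l.NeBot]
    [CardinalInterFilter l (Cardinal.lift.{1} κ)] (hl : l ≤ 𝓝[<] κ.ord) : IdealK κ where
  mem := {X | X ⊆ Iio κ.ord ∧ Xᶜ ∈ l}
  subset_iio _ hX := hX.1
  singleton_mem α hα := ⟨singleton_subset_iff.2 hα,
    hl (mem_of_superset (Ioo_mem_nhdsLT hα) fun _ hβ ↦ hβ.1.ne')⟩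
  subset_mem X hX Y hYX :=
    ⟨hYX.trans hX.1, mem_of_superset hX.2 (compl_subset_compl.2 hYX)⟩
  sUnion_mem S hS hcard := by
    refine ⟨sUnion_subset fun X hX ↦ (hS hX).1, ?_⟩
    rw [compl_sUnion]
    exact (cardinal_sInter_mem (mk_image_le.trans_lt hcard)).2
      (forall_mem_image.2 fun X hX ↦ (hS hX).2)
  ne_top h := compl_notMem (hl self_mem_nhdsWithin) h.2

variable [l.NeBot] [CardinalInterFilter l (Cardinal.lift.{1} κ)] {hl : l ≤ 𝓝[<] κ.ord}

theorem IdealK.mem_plus_ofFilter_iff {A : Set Ordinal.{0}} :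
    A ∈ (IdealK.ofFilter l hl).plus ↔ A ⊆ Iio κ.ord ∧ ∃ᶠ α in l, α ∈ A :=
  and_congr_right fun hA ↦ not_congr (and_iff_right hA)

theorem IdealK.cof_ofFilter_le {ι : Type 1} {p : ι → Prop} {s : ι → Set Ordinal.{0}}
    {c : Cardinal.{0}} (hs : l.HasBasis p s) (hc : #{i // p i} ≤ Cardinal.lift.{1} c) :
    (IdealK.ofFilter l hl).cof ≤ c := by
  have hmem : ∀ i, p i → Iio κ.ord \ s i ∈ (IdealK.ofFilter l hl).mem := fun i hi ↦
    ⟨sdiff_subset, mem_of_superset (hs.mem_of_mem hi) fun _ hα hα' ↦ hα'.2 hα⟩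
  refine leastCard_le (F := (fun i ↦ Iio κ.ord \ s i) '' {i | p i})
    ⟨image_subset_iff.2 hmem, fun A ↦ ⟨fun hA ↦ ?_, ?_⟩⟩ (mk_image_le.trans hc)
  · obtain ⟨i, hi, hiA⟩ := hs.mem_iff.1 hA.2
    exact ⟨_, mem_image_of_mem _ hi, fun α hα ↦ ⟨hA.1 hα, fun hαi ↦ hiA hαi hα⟩⟩
  · rintro ⟨_, ⟨i, hi, rfl⟩, hA⟩
    exact IdealK.subset_mem _ _ (hmem i hi) A hA

theorem weaklySelective_of_cof_lt_nonK {J : IdealK κ}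
    (hJ : J.cof < nonK κ fun J ↦ WeaklySelective J) : WeaklySelective J := by
  by_contra hnot
  have hle : nonK κ (fun J ↦ WeaklySelective J) ≤ J.cof := csInf_le' ⟨J, rfl, hnot⟩
  exact hle.not_gt hJ

variable [Fact κ.IsRegular]

theorem WeaklySelective.exists_forall_lt {J : IdealK κ} (hJ : WeaklySelective J)
    {A : Set Ordinal.{0}} (hA : A ∈ J.plus) {h : Ordinal.{0} → Ordinal.{0}}
    (hmaps : MapsTo h A (Iio κ.ord)) (hfib : ∀ γ, {α ∈ A | h α = γ} ∈ J.mem) :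
    ∃ E ∈ J.plus, E ⊆ A ∧ ∀ α ∈ E, ∀ β ∈ E, α < β → α < h β := by
  obtain ⟨D, hD, hDA, hsmall⟩ := hJ.1 A hA h hmaps hfib
  have hbound : ∀ α ∈ Iio κ.ord, ∃ γ < κ.ord, ∀ β ∈ D, h β ≤ α → β < γ := by
    intro α hα
    have hfew : ∀ δ ∈ Iic α, ∀ᶠ γ in 𝓝[<] κ.ord, ∀ β ∈ {β ∈ D | h β = δ}, β < γ := fun δ _ ↦
      (eventually_cardinal_ball (hsmall δ)).2 fun β hβ ↦
        mem_of_superset (Ioo_mem_nhdsLT (hD.1 hβ.1)) fun _ hγ ↦ hγ.1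
    have hIic : #(Iic α) < Cardinal.lift.{1} κ := by
      rw [← Order.Iio_succ]
      exact mk_Iio_lt_lift (isSuccLimit_ord_of_isRegular.succ_lt hα)
    obtain ⟨γ, hγ, hγκ⟩ :=
      (((eventually_cardinal_ball hIic).2 hfew).and self_mem_nhdsWithin).exists
    exact ⟨γ, hγκ, fun β hβ hle ↦ hγ _ hle β ⟨hβ, rfl⟩⟩
  choose! g hg hgbound using hbound
  obtain ⟨E, hE, hED, hgE⟩ := hJ.2 D hD g hg
  refine ⟨E, hE, hED.trans hDA, fun α hα β hβ hαβ ↦ ?_⟩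
  by_contra! hle
  exact (hgE α hα β hβ hαβ).not_gt (hgbound α (hE.1 hα) β (hED hβ) hle)

theorem WeaklySelective.exists_frequently_forall_lt {l : Filter Ordinal.{0}} [l.NeBot]
    [CardinalInterFilter l (Cardinal.lift.{1} κ)] {hl : l ≤ 𝓝[<] κ.ord}
    (hsel : WeaklySelective (IdealK.ofFilter l hl)) {h : Ordinal.{0} → Ordinal.{0}}
    (hmaps : MapsTo h (Iio κ.ord) (Iio κ.ord)) (hh : Tendsto h l (𝓝[<] κ.ord)) :
    ∃ E : Set Ordinal.{0}, (∃ᶠ β in l, β ∈ E) ∧ ∀ α ∈ E, ∀ β ∈ E, α < β → α < h β := by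
  have hκ : ∃ᶠ β in l, β ∈ Iio κ.ord := Eventually.frequently (hl self_mem_nhdsWithin)
  have hfib : ∀ γ, {β ∈ Iio κ.ord | h β = γ} ∈ (IdealK.ofFilter l hl).mem := by
    refine fun γ ↦ ⟨sep_subset _ _, ?_⟩
    have hne : ∀ᶠ δ in 𝓝[<] κ.ord, δ ≠ γ := by
      rcases eq_or_ne κ.ord γ with rfl | hγ
      · exact eventually_mem_nhdsWithin.mono fun _ hδ ↦ hδ.ne
      · exact eventually_ne_nhdsWithin hγ
    filter_upwards [hh.eventually hne] with β hβ hβγ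
    exact hβ hβγ.2
  obtain ⟨E, hE, -, hlt⟩ :=
    hsel.exists_forall_lt (IdealK.mem_plus_ofFilter_iff.2 ⟨Subset.rfl, hκ⟩) hmaps hfib
  exact ⟨E, (IdealK.mem_plus_ofFilter_iff.1 hE).2, hlt⟩

theorem eventually_le_or_exists_forall_lt {l : Filter Ordinal.{0}}
    [CardinalInterFilter l (Cardinal.lift.{1} κ)] (hl : l ≤ 𝓝[<] κ.ord)
    {ι : Type 1} {p : ι → Prop} {s : ι → Set Ordinal.{0}} {c : Cardinal.{0}} (hs : l.HasBasis p s)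
    (hc : #{i // p i} ≤ Cardinal.lift.{1} c) (hκc : κ ≤ c)
    (hnon : c < nonK κ fun J ↦ WeaklySelective J)
    {h : Ordinal.{0} → Ordinal.{0}} (hmaps : MapsTo h (Iio κ.ord) (Iio κ.ord)) :
    (∃ γ < κ.ord, ∀ᶠ β in l, h β ≤ γ) ∨
      ∃ E : Set Ordinal.{0}, (∃ᶠ β in l, β ∈ E) ∧ ∀ α ∈ E, ∀ β ∈ E, α < β → α < h β := by
  have hbasis := (hasBasis_nhdsLT_ord (κ := κ)).comap h
  rcases (l ⊓ comap h (𝓝[<] κ.ord)).eq_or_neBot with hbot | hbot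
  · obtain ⟨i, hi, γ, hγ, hdisj⟩ := (hs.disjoint_iff hbasis).1 (disjoint_iff.2 hbot)
    refine .inl ⟨γ, hγ, ?_⟩
    filter_upwards [hs.mem_of_mem hi, hl self_mem_nhdsWithin] with β hβ hβκ
    by_contra! hlt
    exact disjoint_left.1 hdisj hβ ⟨hlt, hmaps hβκ⟩
  · right
    have hl' : l ⊓ comap h (𝓝[<] κ.ord) ≤ 𝓝[<] κ.ord := inf_le_left.trans hl
    have hcof : (IdealK.ofFilter _ hl').cof ≤ c :=
      IdealK.cof_ofFilter_le (hs.inf hbasis)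
        (mk_prod_subtype_lt_ord_le ((Fact.out : κ.IsRegular).aleph0_le.trans hκc) hκc hc)
    have hsel : WeaklySelective (IdealK.ofFilter _ hl') :=
      weaklySelective_of_cof_lt_nonK (hcof.trans_lt hnon)
    obtain ⟨E, hE, hlt⟩ :=
      hsel.exists_frequently_forall_lt hmaps (tendsto_comap.mono_left inf_le_right)
    exact ⟨E, hE.filter_mono inf_le_left, hlt⟩

end IdealsOnCardinal

section DualFilter

variable {κ lam : Cardinal.{0}}

theorem IdealP.exists_cofinal_mk_eq_cof (H : IdealP κ lam) :
    ∃ X ⊆ H.mem, (∀ A ∈ H.mem, ∃ B ∈ X, A ⊆ B) ∧ #X = Cardinal.lift.{1} H.cof := by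
  have hsub : H.mem ⊆ 𝒫 𝒫 Iio lam.ord := fun A hA a ha ↦ (H.subset_pk A hA ha).1
  have : Small.{0} H.mem := small_subset hsub
  obtain ⟨X, ⟨hX, hcof⟩, hcard⟩ := leastCard_spec (X := Set (Set Ordinal.{0}))
    (P := fun X ↦ X ⊆ H.mem ∧ ∀ A, A ∈ H.mem ↔ ∃ B ∈ X, A ⊆ B) (F := H.mem)
    ⟨Subset.rfl, fun A ↦ ⟨fun hA ↦ ⟨A, hA, Subset.rfl⟩, fun ⟨B, hB, hAB⟩ ↦
      H.subset_mem B hB A hAB⟩⟩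
  exact ⟨X, hX, fun A ↦ (hcof A).1, hcard.symm⟩

variable [Fact κ.IsRegular]

/-- The filter of sets whose complement is negligible for the ideal `H`. It lives on all sets of
ordinals and concentrates on `P_κ(λ)`. -/
def IdealP.dual (H : IdealP κ lam) : Filter (Set Ordinal.{0}) :=
  .ofCardinalInter (c := Cardinal.lift.{1} κ) {S | smallSet κ lam \ S ∈ H.mem}
    ((Fact.out : κ.IsRegular).lift.nat_lt 2)
    (fun X hX hmem ↦ by
      have hcompl : smallSet κ lam \ ⋂₀ X = ⋃₀ ((smallSet κ lam \ ·) '' X) := by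
        simp only [sInter_eq_biInter, sdiff_eq, compl_iInter, inter_iUnion, sUnion_image]
      rw [mem_ofPred_eq, hcompl]
      exact H.sUnion_mem _ (image_subset_iff.2 hmem) (mk_image_le.trans_lt hX))
    (fun S T hS hST ↦ H.subset_mem _ hS _ (sdiff_subset_sdiff_right hST))

theorem IdealP.mem_dual {H : IdealP κ lam} {S : Set (Set Ordinal.{0})} :
    S ∈ H.dual ↔ smallSet κ lam \ S ∈ H.mem :=
  Iff.rfl

instance (H : IdealP κ lam) : CardinalInterFilter H.dual (Cardinal.lift.{1} κ) :=
  inferInstanceAs (CardinalInterFilter (Filter.ofCardinalInter _ _ _ _) _)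

instance (H : IdealP κ lam) : H.dual.NeBot := by
  refine ⟨fun h ↦ H.ne_top ?_⟩
  simpa using IdealP.mem_dual.1 (empty_mem_iff_bot.2 h)

theorem IdealP.smallSet_mem_dual (H : IdealP κ lam) : smallSet κ lam ∈ H.dual := by
  rw [H.mem_dual, sdiff_self]
  exact H.fine ⟨empty_subset _, ∅,
    ⟨empty_subset _, by simp [(Fact.out : κ.IsRegular).pos]⟩, by simp⟩

theorem IdealP.eventually_subset_dual (H : IdealP κ lam) {a : Set Ordinal.{0}}
    (ha : a ∈ smallSet κ lam) : ∀ᶠ b in H.dual, a ⊆ b :=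
  IdealP.mem_dual.2 <| H.fine ⟨sdiff_subset, a, ha, fun _ hb ↦ hb.2⟩

theorem IdealP.mem_plusOf_iff {H : IdealP κ lam} {B : Set (Set Ordinal.{0})} :
    B ∈ plusOf κ lam H.mem ↔ B ⊆ smallSet κ lam ∧ ∃ᶠ b in H.dual, b ∈ B := by
  refine and_congr_right fun hB ↦ not_congr ?_
  change B ∈ H.mem ↔ Bᶜ ∈ H.dual
  rw [H.mem_dual, sdiff_compl, inter_eq_right.2 hB]

theorem supK_lt_ord {a : Set Ordinal.{0}} (ha : a ∈ smallSet κ lam) : supK κ a < κ.ord := by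
  refine Ordinal.sSup_lt_of_lt_cof ?_ fun _ hi ↦ hi.2
  rw [← Ordinal.lift_cof, (Fact.out : κ.IsRegular).cof_ord]
  exact (mk_le_mk_of_subset inter_subset_left).trans_lt ha.2

omit [Fact κ.IsRegular] in
theorem le_supK {a : Set Ordinal.{0}} {γ : Ordinal.{0}} (hγ : γ < κ.ord) (ha : γ ∈ a) :
    γ ≤ supK κ a :=
  le_csSup ⟨κ.ord, fun _ hi ↦ hi.2.le⟩ ⟨ha, hγ⟩

theorem IdealP.tendsto_supK_dual (H : IdealP κ lam) (hle : κ ≤ lam) :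
    Tendsto (supK κ) H.dual (𝓝[<] κ.ord) := by
  refine hasBasis_nhdsLT_ord.tendsto_right_iff.2 fun γ hγ ↦ ?_
  have hγ' : γ + 1 < κ.ord := isSuccLimit_ord_of_isRegular.add_one_lt hγ
  have hsmall : {γ + 1} ∈ smallSet κ lam := by
    refine ⟨singleton_subset_iff.2 (hγ'.trans_le (ord_le_ord.2 hle)), ?_⟩
    simpa using (Fact.out : κ.IsRegular).nat_lt 1
  filter_upwards [H.smallSet_mem_dual, H.eventually_subset_dual hsmall] with b hb hγb
  exact ⟨(lt_add_one γ).trans_le (le_supK hγ' (hγb rfl)), supK_lt_ord hb⟩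

theorem IdealP.exists_hasBasis_dual_mk_eq_cof (H : IdealP κ lam) :
    ∃ X : Set (Set (Set Ordinal.{0})), #X = Cardinal.lift.{1} H.cof ∧
      H.dual.HasBasis (· ∈ X) fun A ↦ smallSet κ lam \ A := by
  obtain ⟨X, hX, hcof, hcard⟩ := H.exists_cofinal_mk_eq_cof
  refine ⟨X, hcard, ⟨fun S ↦ IdealP.mem_dual.trans ⟨fun hS ↦ ?_, ?_⟩⟩⟩
  · obtain ⟨B, hB, hSB⟩ := hcof _ hS
    exact ⟨B, hB, sdiff_subset_comm.1 hSB⟩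
  · rintro ⟨B, hB, hBS⟩
    exact H.subset_mem B (hX hB) _ (sdiff_subset_comm.1 hBS)

theorem IdealP.le_cof (H : IdealP κ lam) (hle : κ ≤ lam) : κ ≤ H.cof := by
  obtain ⟨X, hcard, hbasis⟩ := H.exists_hasBasis_dual_mk_eq_cof
  by_contra! hlt
  have hX : #X < Cardinal.lift.{1} κ := hcard.trans_lt (Cardinal.lift_lt.2 hlt)
  obtain ⟨b, hb⟩ :=
    (((eventually_cardinal_ball hX).2 fun A hA ↦ hbasis.mem_of_mem hA).and
      H.smallSet_mem_dual).exists
  have hlarger : {c | supK κ b < supK κ c} ∈ H.dual :=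
    ((H.tendsto_supK_dual hle).eventually (Ioo_mem_nhdsLT (supK_lt_ord hb.2))).mono
      fun _ hc ↦ hc.1
  obtain ⟨A, hA, hAsub⟩ := hbasis.mem_iff.1 hlarger
  exact lt_irrefl (supK κ b) (hAsub (hb.1 A hA))

end DualFilter

section Dichotomy

variable {κ lam : Cardinal.{0}} {F : Ordinal.{0} → Ordinal.{0} → Fin 2} {S : Set Ordinal.{0}}
  {α β : Ordinal.{0}}

/-- The least `α ∈ S` with `F α β = 1`, truncated to `β` when there is none below `β`. -/
noncomputable def leastOne (F : Ordinal.{0} → Ordinal.{0} → Fin 2) (S : Set Ordinal.{0})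
    (β : Ordinal.{0}) : Ordinal.{0} :=
  sInf (insert β {α ∈ S | F α β = 1})

theorem leastOne_le_self : leastOne F S β ≤ β :=
  csInf_le' (mem_insert _ _)

theorem leastOne_le (hα : α ∈ S) (hF : F α β = 1) : leastOne F S β ≤ α :=
  csInf_le' (mem_insert_of_mem _ ⟨hα, hF⟩)

theorem leastOne_mem_of_lt (h : leastOne F S β < β) :
    leastOne F S β ∈ S ∧ F (leastOne F S β) β = 1 :=
  (csInf_mem (insert_nonempty _ _)).resolve_left h.ne

/-- The relation `a ≺ b` refined by the demand that `F` take the value `1` on the pair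
determined by `a` and `b`. -/
def PrecOne (κ : Cardinal.{0}) (F : Ordinal.{0} → Ordinal.{0} → Fin 2) (a b : Set Ordinal.{0}) :
    Prop :=
  prec κ a b ∧ F (supK κ a) (supK κ b) = 1

variable [Fact κ.IsRegular] {C : Set (Set Ordinal.{0})}

theorem IdealP.exists_eventually_precOne_of_leastOne_le (H : IdealP κ lam) (hle : κ ≤ lam)
    (hC : C ⊆ smallSet κ lam) {γ : Ordinal.{0}} (hγ : γ < κ.ord)
    (hbound : ∀ᶠ b in H.dual, b ∈ C → leastOne F (supK κ '' C) (supK κ b) ≤ γ) :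
    ∃ x ⊆ C, #x < Cardinal.lift.{1} κ ∧ ∀ᶠ b in H.dual, b ∈ C → ∃ a ∈ x, PrecOne κ F a b := by
  obtain ⟨x, hx, hbij⟩ := exists_subset_bijOn {a ∈ C | supK κ a ≤ γ} (supK κ)
  have hcard : #x < Cardinal.lift.{1} κ :=
    calc #x = #(supK κ '' {a ∈ C | supK κ a ≤ γ}) := mk_congr hbij.equiv
      _ ≤ #(Iio (Order.succ γ)) :=
        mk_le_mk_of_subset (image_subset_iff.2 fun _ ha ↦ Order.lt_succ_of_le ha.2)
      _ < Cardinal.lift.{1} κ := mk_Iio_lt_lift (isSuccLimit_ord_of_isRegular.succ_lt hγ)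
  have hsubset : ∀ᶠ b in H.dual, ∀ a ∈ x, a ⊆ b :=
    (eventually_cardinal_ball hcard).2 fun a ha ↦ H.eventually_subset_dual (hC (hx ha).1)
  refine ⟨x, fun a ha ↦ (hx ha).1, hcard, ?_⟩
  filter_upwards [hbound, hsubset, (H.tendsto_supK_dual hle).eventually (Ioo_mem_nhdsLT hγ)]
    with b hb hxb hγb hbC
  have hlt : leastOne F (supK κ '' C) (supK κ b) < supK κ b := (hb hbC).trans_lt hγb.1
  obtain ⟨⟨a₀, ha₀, ha₀b⟩, hone⟩ := leastOne_mem_of_lt hlt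
  obtain ⟨a, ha, haa₀⟩ := hbij.surjOn
    (mem_image_of_mem (supK κ) (show a₀ ∈ {a ∈ C | supK κ a ≤ γ} from ⟨ha₀, ha₀b ▸ hb hbC⟩))
  have hab : supK κ a = leastOne F (supK κ '' C) (supK κ b) := haa₀.trans ha₀b
  exact ⟨a, ha, ⟨hxb a ha, hab ▸ hlt⟩, hab ▸ hone⟩

theorem IdealP.exists_plus_or_exists_eventually_precOne (H : IdealP κ lam) (hle : κ ≤ lam)
    (hcof : H.cof < nonK κ fun J ↦ WeaklySelective J) (F : Ordinal.{0} → Ordinal.{0} → Fin 2)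
    (hC : C ⊆ smallSet κ lam) :
    (∃ B ⊆ C, B ∈ plusOf κ lam H.mem ∧ ∀ p ∈ pairsKK κ B, F p.1 p.2 = 0) ∨
      ∃ x ⊆ C, #x < Cardinal.lift.{1} κ ∧ ∀ᶠ b in H.dual, b ∈ C → ∃ a ∈ x, PrecOne κ F a b := by
  obtain ⟨X, hX, hbasis⟩ := H.exists_hasBasis_dual_mk_eq_cof
  have htends : Tendsto (supK κ) (H.dual ⊓ 𝓟 C) (𝓝[<] κ.ord) :=
    (H.tendsto_supK_dual hle).mono_left inf_le_left
  rcases eventually_le_or_exists_forall_lt htends ((hbasis.inf_principal C).map (supK κ)) hX.le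
    (H.le_cof hle) hcof (h := leastOne F (supK κ '' C))
    (fun β hβ ↦ leastOne_le_self.trans_lt hβ) with ⟨γ, hγ, hbound⟩ | ⟨E, hE, hlt⟩
  · exact .inr <| H.exists_eventually_precOne_of_leastOne_le hle hC hγ
      (eventually_inf_principal.1 (eventually_map.1 hbound))
  · refine .inl ⟨C ∩ supK κ ⁻¹' E, inter_subset_left, ?_, ?_⟩
    · exact IdealP.mem_plusOf_iff.2 ⟨inter_subset_left.trans hC,
        frequently_inf_principal.1 (frequently_map.1 hE)⟩
    · rintro _ ⟨a, ha, b, hb, hab, rfl⟩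
      by_contra hne
      exact (hlt _ ha.2 _ hb.2 hab).not_ge
        (leastOne_le (mem_image_of_mem _ ha.1) (Fin.eq_one_of_ne_zero _ hne))

end Dichotomy

section BranchSets

variable {X : Type 1} {x : Set X → Set X}

/-- The sets `s '' Iio j` for the sequences `s` that follow `x`, in the sense that each term
`s i` with `i < j` is chosen from `x (s '' Iio i)`. -/
def branchSets (x : Set X → Set X) (j : Ordinal.{0}) : Set (Set X) :=
  {K | ∃ s : Ordinal.{0} → X, (∀ i < j, s i ∈ x (s '' Iio i)) ∧ s '' Iio j = K}

theorem mk_branchSets_lt {κ : Cardinal.{0}} [Fact κ.IsRegular] {η j : Ordinal.{0}}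
    (hη : η < κ.ord) (hpow : ∀ τ < κ, ∀ ξ < η, τ ^ ξ.card < κ)
    (hx : ∀ K, #(x K) < Cardinal.lift.{1} κ) (hj : j < η) :
    #(branchSets x j) < Cardinal.lift.{1} κ := by
  induction j using WellFoundedLT.induction with
  | ind j ih =>
    have hκ : (Cardinal.lift.{1} κ).IsRegular := (Fact.out : κ.IsRegular).lift
    let U : Set X := ⋃ i ∈ Iio j, ⋃ K ∈ branchSets x i, x K
    have hU : #U < Cardinal.lift.{1} κ :=
      (card_biUnion_lt_iff_forall_of_isRegular hκ (mk_Iio_lt_lift (hj.trans hη))).2 fun i hi ↦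
        (card_biUnion_lt_iff_forall_of_isRegular hκ (ih i hi (hi.trans hj))).2 fun K _ ↦ hx K
    obtain ⟨τ, hτ⟩ := mem_range_lift_of_le hU.le
    have hsub : branchSets x j ⊆ range fun g : Iio j → U ↦ range fun i ↦ (g i : X) := by
      rintro _ ⟨s, hs, rfl⟩
      have hsU : ∀ i : Iio j, s i ∈ U := fun i ↦ by
        simp only [U, mem_iUnion]
        exact ⟨i, i.2, _, ⟨s, fun k hk ↦ hs k (hk.trans i.2), rfl⟩, hs i i.2⟩
      exact ⟨fun i ↦ ⟨s i, hsU i⟩, by simp only [image_eq_range]⟩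
    calc #(branchSets x j) ≤ #(Iio j → U) := (mk_le_mk_of_subset hsub).trans mk_range_le
      _ = Cardinal.lift.{1} (τ ^ j.card) := by rw [← power_def, mk_Iio_ordinal, ← hτ, lift_power]
      _ < Cardinal.lift.{1} κ :=
        Cardinal.lift_lt.2 (hpow τ (Cardinal.lift_lt.1 (hτ.trans_lt hU)) j hj)

theorem exists_forall_eq_apply_image_Iio {ι X : Type*} [Preorder ι] [WellFoundedLT ι]
    (p : Set X → X) : ∃ s : ι → X, ∀ j, s j = p (s '' Iio j) := by
  refine ⟨WellFoundedLT.fix fun j s ↦ p (range fun i : Iio j ↦ s i i.2), fun j ↦ ?_⟩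
  rw [WellFoundedLT.fix_eq, image_eq_range]

end BranchSets

section Chains

variable {X : Type 1} {κ : Cardinal.{0}} [Fact κ.IsRegular] {l : Filter X}
  [CardinalInterFilter l (Cardinal.lift.{1} κ)]

variable {η : Ordinal.{0}} {A : Set X} {R : X → X → Prop}

theorem exists_branch_of_frequently (hη : η < κ.ord) (hpow : ∀ τ < κ, ∀ ξ < η, τ ^ ξ.card < κ)
    (hA : ∃ᶠ b in l, b ∈ A)
    (hR : ∀ C ⊆ A, ∃ x ⊆ C, #x < Cardinal.lift.{1} κ ∧ ∀ᶠ b in l, b ∈ C → ∃ a ∈ x, R a b) :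
    ∃ s : Ordinal.{0} → X, ∃ b ∈ A, ∀ j < η, s j ∈ A ∧ R (s j) b ∧ ∀ i < j, R (s i) (s j) := by
  choose x hxC hxcard hx using fun K : Set X ↦
    hR {b ∈ A | ∀ a ∈ K, R a b} (sep_subset _ _)
  have hcard : #(⋃ j ∈ Iio η, branchSets x j) < Cardinal.lift.{1} κ :=
    (card_biUnion_lt_iff_forall_of_isRegular (Fact.out : κ.IsRegular).lift
      (mk_Iio_lt_lift hη)).2 fun j hj ↦ mk_branchSets_lt hη hpow hxcard hj
  obtain ⟨b, hbA, hb⟩ :=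
    (hA.and_eventually ((eventually_cardinal_ball hcard).2 fun K _ ↦ hx K)).exists
  have : Nonempty X := ⟨b⟩
  choose! p hpx hpR using hb
  obtain ⟨s, hs⟩ := exists_forall_eq_apply_image_Iio (ι := Ordinal.{0}) p
  have hbranch : ∀ j < η, s j ∈ x (s '' Iio j) ∧ R (s j) b := by
    intro j hj
    induction j using WellFoundedLT.induction with
    | ind j ih =>
      have hmem : s '' Iio j ∈ ⋃ j ∈ Iio η, branchSets x j :=
        mem_biUnion hj ⟨s, fun i hi ↦ (ih i hi (hi.trans hj)).1, rfl⟩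
      have hbelow : b ∈ {b ∈ A | ∀ a ∈ s '' Iio j, R a b} :=
        ⟨hbA, forall_mem_image.2 fun i hi ↦ (ih i hi (hi.trans hj)).2⟩
      rw [hs j]
      exact ⟨hpx _ hmem hbelow, hpR _ hmem hbelow⟩
  refine ⟨s, b, hbA, fun j hj ↦ ?_⟩
  obtain ⟨hsA, hsR⟩ := hxC _ (hbranch j hj).1
  exact ⟨hsA, (hbranch j hj).2, fun i hi ↦ hsR _ (mem_image_of_mem s hi)⟩

theorem exists_chain_of_frequently (hη : η < κ.ord) (hpow : ∀ τ < κ, ∀ ξ < η, τ ^ ξ.card < κ)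
    (hA : ∃ᶠ b in l, b ∈ A)
    (hR : ∀ C ⊆ A, ∃ x ⊆ C, #x < Cardinal.lift.{1} κ ∧ ∀ᶠ b in l, b ∈ C → ∃ a ∈ x, R a b) :
    ∃ e : Ordinal.{0} → X, (∀ i < η + 1, e i ∈ A) ∧ ∀ j < η + 1, ∀ i < j, R (e i) (e j) := by
  obtain ⟨s, b, hbA, hs⟩ := exists_branch_of_frequently hη hpow hA hR
  have hupdate : ∀ i < η, Function.update s η b i = s i := fun i hi ↦
    Function.update_of_ne hi.ne _ _
  refine ⟨Function.update s η b, fun i hi ↦ ?_, fun j hj i hij ↦ ?_⟩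
  · rcases (Order.lt_add_one_iff.1 hi).eq_or_lt with rfl | hi
    · rwa [Function.update_self]
    · rw [hupdate i hi]
      exact (hs i hi).1
  · rcases (Order.lt_add_one_iff.1 hj).eq_or_lt with rfl | hj
    · rw [Function.update_self, hupdate i hij]
      exact (hs i hij).2.1
    · rw [hupdate j hj, hupdate i (hij.trans hj)]
      exact (hs j hj).2.2 i hij

end Chains

theorem ordTypePrec_image_of_precOne {κ : Cardinal.{0}} {F : Ordinal.{0} → Ordinal.{0} → Fin 2}
    {e : Ordinal.{0} → Set Ordinal.{0}} {α : Ordinal.{0}}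
    (he : ∀ j < α, ∀ i < j, PrecOne κ F (e i) (e j)) : OrdTypePrec κ (e '' Iio α) α :=
  ⟨e, fun i _ j hj hij ↦ (he j hj i hij).1, rfl⟩

theorem eq_one_of_mem_pairsKK_of_precOne {κ : Cardinal.{0}}
    {F : Ordinal.{0} → Ordinal.{0} → Fin 2} {e : Ordinal.{0} → Set Ordinal.{0}} {α : Ordinal.{0}}
    (he : ∀ j < α, ∀ i < j, PrecOne κ F (e i) (e j)) :
    ∀ p ∈ pairsKK κ (e '' Iio α), F p.1 p.2 = 1 := by
  rintro _ ⟨_, ⟨i, hi, rfl⟩, _, ⟨j, hj, rfl⟩, hlt, rfl⟩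
  rcases lt_trichotomy i j with hij | rfl | hji
  · exact (he j hj i hij).2
  · exact absurd hlt (lt_irrefl _)
  · exact absurd hlt (he i hi j hji).1.2.not_gt

theorem arrowPKK_of_cof_lt_non_general {κ lam : Cardinal.{0}} {η : Ordinal.{0}}
    (hκ : κ.IsRegular) (hle : κ ≤ lam) (hη : η < κ.ord)
    (hpow : ∀ τ < κ, ∀ ξ < η, τ ^ ξ.card < κ) (H : IdealP κ lam)
    (hcof : H.cof < nonK κ fun J ↦ WeaklySelective J) : ArrowPKK κ lam H.mem (η + 1) := by
  intro F A hA
  have : Fact κ.IsRegular := ⟨hκ⟩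
  by_cases! hzero : ∃ B ⊆ A, B ∈ plusOf κ lam H.mem ∧ ∀ p ∈ pairsKK κ B, F p.1 p.2 = 0
  · obtain ⟨B, hBA, hB⟩ := hzero
    exact ⟨B, hBA, .inl hB⟩
  have hfew : ∀ C ⊆ A, ∃ x ⊆ C, #x < Cardinal.lift.{1} κ ∧
      ∀ᶠ b in H.dual, b ∈ C → ∃ a ∈ x, PrecOne κ F a b := fun C hCA ↦
    (H.exists_plus_or_exists_eventually_precOne hle hcof F (hCA.trans hA.1)).resolve_left
      fun ⟨B, hBC, hB, hBF⟩ ↦ by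
        obtain ⟨p, hp, hne⟩ := hzero B (hBC.trans hCA) hB
        exact hne (hBF p hp)
  obtain ⟨e, heA, heF⟩ :=
    exists_chain_of_frequently hη hpow (IdealP.mem_plusOf_iff.1 hA).2 hfew
  exact ⟨e '' Iio (η + 1), image_subset_iff.2 heA,
    .inr ⟨ordTypePrec_image_of_precOne heF, eq_one_of_mem_pairsKK_of_precOne heF⟩⟩

/-- Suppose `θ` is an infinite cardinal `< κ` with `κ → (κ, θ)²` and `H` is an
ideal on `P_κ(λ)` with `cof(H) < non_κ(weakly selective)`. Then `H⁺ →_{κ,κ} (H⁺, θ+1)²`. -/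
theorem arrowPKK_of_cof_lt_non (κ lam θ : Cardinal.{0}) (hreg : κ.IsRegular) (huc : ℵ₀ < κ)
    (hlt : κ < lam) (hθ : ℵ₀ ≤ θ) (hθκ : θ < κ) (harrow : ArrowKTheta κ θ.ord)
    (H : IdealP κ lam) (hcof : H.cof < nonK κ (fun J => WeaklySelective J)) :
    ArrowPKK κ lam H.mem (θ.ord + 1) :=
  arrowPKK_of_cof_lt_non_general hreg hlt.le (ord_lt_ord.2 hθκ)
    (fun _ hτ _ hξ ↦ power_lt_of_arrowKTheta hreg hθκ.le harrow hτ (lt_ord.1 hξ)) H hcof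

end PaperFormal
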